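/- Let σ ∈ (0,1], let I ⊂ ℝ be a bounded interval, and let U be a nonempty subset of L²(I) with sup_{u∈U} ‖u‖_{L²(I)} < ∞. Let 𝓛 : L²(I) → ℂ be a bounded sublinear functional, i.e. there is K ≥ 0 with |𝓛(f)| ≤ K‖f‖_{L²(I)} for all f, |𝓛(f+g)| ≤ |𝓛(f)| + |𝓛(g)| for all f, g, and |𝓛(af)| = |a||𝓛(f)| for all a ∈ ℂ and f. Set A_σ = sup{ |𝓛(f)|/‖f‖_{L²(I)} : f ∈ L²(I), f ≠ 0, f is σ-uniform in U } (with A_σ = 0 if no such f exists) and M = sup_{u∈U} |𝓛(u)|. Then for every f ∈ L²(I): |𝓛(f)| ≤ max{A_σ, 2σ^{−1}M} · ‖f‖_{L²(I)}. -/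

import Mathlib

open MeasureTheory Real Set

noncomputable section

/-- `f` is σ-uniform in `U ⊆ L²(I)`:
`|∫_I f · conj u| ≤ σ ‖f‖_{L²(I)}` for every `u ∈ U`. -/
def SigmaUniform (I : Set ℝ) (σ : ℝ)
    (U : Set (Lp ℂ 2 (volume.restrict I))) (f : Lp ℂ 2 (volume.restrict I)) : Prop :=
  ∀ u ∈ U, ‖∫ x, f x * (starRingEnd ℂ) (u x) ∂(volume.restrict I)‖ ≤ σ * ‖f‖

/-!
By Hahn-Banach and the Riesz representation theorem, a bounded seminorm `p` on a Hilbert space has,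
for each `f`, a vector `h` with `⟪h, f⟫ = p f` and `|⟪h, g⟫| ≤ p g` for all `g`, so that
`p f ≤ ‖h‖ ‖f‖`. If `h` is σ-uniform, then `‖h‖² ≤ p h ≤ A_σ ‖h‖`; otherwise some `u ∈ U` has
`σ ‖h‖ < |⟪h, u⟫| ≤ p u ≤ M`. Hence `‖h‖ ≤ max {A_σ, σ⁻¹ M}`, without the factor `2`.
-/

section SeminormDual

variable {𝕜 E : Type*} [RCLike 𝕜]

theorem exists_dual_apply_eq_seminorm [AddCommGroup E] [Module 𝕜 E] (p : Seminorm 𝕜 E) (f : E) :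
    ∃ φ : Module.Dual 𝕜 E, φ f = p f ∧ ∀ g, ‖φ g‖ ≤ p g := by
  -- Norming functionals exist in every seminormed space, in particular in `E` normed by `p`.
  let : SeminormedAddCommGroup E := p.toAddGroupSeminorm.toSeminormedAddCommGroup
  let : NormedSpace 𝕜 E := ⟨fun a g => (map_smul_eq_mul p a g).le⟩
  obtain ⟨φ, hφ, hφf⟩ := exists_dual_vector'' 𝕜 f
  exact ⟨φ.toLinearMap, hφf, fun g => (φ.le_of_opNorm_le hφ g).trans_eq (one_mul _)⟩

theorem exists_inner_eq_seminorm [NormedAddCommGroup E] [InnerProductSpace 𝕜 E] [CompleteSpace E]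
    (p : Seminorm 𝕜 E) {K : ℝ} (hp : ∀ g, p g ≤ K * ‖g‖) (f : E) :
    ∃ h : E, inner 𝕜 h f = p f ∧ ∀ g, ‖inner 𝕜 h g‖ ≤ p g := by
  obtain ⟨φ, hφf, hφ⟩ := exists_dual_apply_eq_seminorm p f
  refine ⟨(InnerProductSpace.toDual 𝕜 E).symm (φ.mkContinuous K fun g => (hφ g).trans (hp g)), ?_⟩
  simpa only [InnerProductSpace.toDual_symm_apply, LinearMap.mkContinuous_apply] using
    And.intro hφf hφ

end SeminormDual

section Uniform

variable {𝕜 E : Type*} [RCLike 𝕜] [NormedAddCommGroup E] [InnerProductSpace 𝕜 E]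

variable (𝕜) in
/-- σ-uniformity of a vector `f` in a subset `U` of an inner product space; for `L²(I)` this is
`SigmaUniform`. -/
def IsSigmaUniform (σ : ℝ) (U : Set E) (f : E) : Prop :=
  ∀ u ∈ U, ‖inner 𝕜 u f‖ ≤ σ * ‖f‖

/-- The quantity `A_σ`: the supremum of `p f / ‖f‖` over the nonzero σ-uniform vectors `f`, with the
value `0` if there are none. -/
def sigmaUniformSup (p : Seminorm 𝕜 E) (σ : ℝ) (U : Set E) : ℝ :=
  sSup {r : ℝ | ∃ f : E, f ≠ 0 ∧ IsSigmaUniform 𝕜 σ U f ∧ r = p f / ‖f‖}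

variable (p : Seminorm 𝕜 E) {K σ : ℝ} {U : Set E}

theorem IsSigmaUniform.seminorm_le {f : E} (hf : IsSigmaUniform 𝕜 σ U f)
    (hp : ∀ g, p g ≤ K * ‖g‖) :
    p f ≤ sigmaUniformSup p σ U * ‖f‖ := by
  rcases eq_or_ne f 0 with rfl | hf0
  · simp
  refine (div_le_iff₀ (norm_pos_iff.mpr hf0)).mp (le_csSup ⟨K, ?_⟩ ⟨f, hf0, hf, rfl⟩)
  rintro _ ⟨g, hg0, -, rfl⟩
  exact (div_le_iff₀ (norm_pos_iff.mpr hg0)).mpr (hp g)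

theorem seminorm_le_mul_norm_of_isSigmaUniform [CompleteSpace E] {D : ℝ} (hσ : 0 ≤ σ) (hD : 0 ≤ D)
    (hp : ∀ g, p g ≤ K * ‖g‖) (hU : ∀ u ∈ U, p u ≤ σ * D)
    (huniform : ∀ g, IsSigmaUniform 𝕜 σ U g → p g ≤ D * ‖g‖) (f : E) :
    p f ≤ D * ‖f‖ := by
  obtain ⟨h, hf, hle⟩ := exists_inner_eq_seminorm p hp f
  have norm_le : ‖h‖ ≤ D := by
    by_cases hh : IsSigmaUniform 𝕜 σ U h
    · rcases eq_or_ne h 0 with rfl | h0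
      · simpa using hD
      · refine le_of_mul_le_mul_right ?_ (norm_pos_iff.mpr h0)
        calc ‖h‖ * ‖h‖ = ‖inner 𝕜 h h‖ := by
              rw [inner_self_eq_norm_sq_to_K, norm_pow, RCLike.norm_coe_norm, sq]
          _ ≤ p h := hle h
          _ ≤ D * ‖h‖ := huniform h hh
    · obtain ⟨u, hu, hlt⟩ : ∃ u ∈ U, σ * ‖h‖ < ‖inner 𝕜 u h‖ := by
        simpa only [IsSigmaUniform, not_forall, not_le, exists_prop] using hh
      refine (lt_of_mul_lt_mul_left ?_ hσ).le
      calc σ * ‖h‖ < ‖inner 𝕜 h u‖ := hlt.trans_eq (norm_inner_symm u h)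
        _ ≤ p u := hle u
        _ ≤ σ * D := hU u hu
  calc p f = ‖inner 𝕜 h f‖ := by rw [hf, RCLike.norm_of_nonneg (apply_nonneg p f)]
    _ ≤ ‖h‖ * ‖f‖ := norm_inner_le_norm h f
    _ ≤ D * ‖f‖ := by gcongr

theorem sigma_uniformity_lemma_general [CompleteSpace E] (hσ : 0 < σ) (hp : ∀ g, p g ≤ K * ‖g‖)
    (hU : BddAbove (p '' U)) (f : E) :
    p f ≤ max (sigmaUniformSup p σ U) (1 / σ * sSup (p '' U)) * ‖f‖ := by
  set A := sigmaUniformSup p σ U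
  set M := sSup (p '' U)
  have hM : 0 ≤ M := Real.sSup_nonneg (forall_mem_image.mpr fun u _ => apply_nonneg p u)
  have le_on_U : ∀ u ∈ U, p u ≤ σ * max A (1 / σ * M) := fun u hu => calc
    p u ≤ M := le_csSup hU (mem_image_of_mem p hu)
    _ = σ * (1 / σ * M) := by field_simp
    _ ≤ σ * max A (1 / σ * M) := by gcongr; exact le_max_right _ _
  have le_on_uniform : ∀ g, IsSigmaUniform 𝕜 σ U g → p g ≤ max A (1 / σ * M) * ‖g‖ :=
    fun g hg => calc
      p g ≤ A * ‖g‖ := hg.seminorm_le p hp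
      _ ≤ max A (1 / σ * M) * ‖g‖ := by gcongr; exact le_max_left _ _
  exact seminorm_le_mul_norm_of_isSigmaUniform p hσ.le (le_max_of_le_right (by positivity)) hp
    le_on_U le_on_uniform f

end Uniform

theorem bddAbove_image_of_le_mul_norm {E : Type*} [Norm E] {N : E → ℝ} {U : Set E} {K B : ℝ}
    (hK : 0 ≤ K) (hN : ∀ f, N f ≤ K * ‖f‖) (hU : ∀ u ∈ U, ‖u‖ ≤ B) : BddAbove (N '' U) :=
  ⟨K * B, forall_mem_image.mpr fun u hu =>
    (hN u).trans (mul_le_mul_of_nonneg_left (hU u hu) hK)⟩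

theorem sigmaUniform_iff_isSigmaUniform {I : Set ℝ} {σ : ℝ} {U : Set (Lp ℂ 2 (volume.restrict I))}
    {f : Lp ℂ 2 (volume.restrict I)} : SigmaUniform I σ U f ↔ IsSigmaUniform ℂ σ U f := by
  simp only [SigmaUniform, IsSigmaUniform, L2.inner_def, RCLike.inner_apply]

/-- Li's σ-uniformity lemma: a bounded sublinear functional on `L²(I)`
is controlled by `max {A_σ, 2σ⁻¹ M}`. -/
theorem sigma_uniformity_lemma
    (σ : ℝ) (hσ0 : 0 < σ) (hσ1 : σ ≤ 1)
    (I : Set ℝ) (hI : I.OrdConnected) (hIbdd : Bornology.IsBounded I)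
    (U : Set (Lp ℂ 2 (volume.restrict I))) (hU : U.Nonempty)
    (hUbdd : ∃ B : ℝ, ∀ u ∈ U, ‖u‖ ≤ B)
    (L : Lp ℂ 2 (volume.restrict I) → ℂ)
    (K : ℝ) (hK : 0 ≤ K)
    (hLbdd : ∀ f, ‖L f‖ ≤ K * ‖f‖)
    (hLsub : ∀ f g, ‖L (f + g)‖ ≤ ‖L f‖ + ‖L g‖)
    (hLhom : ∀ (a : ℂ) (f), ‖L (a • f)‖ = ‖a‖ * ‖L f‖)
    (Aσ M : ℝ)
    (hAσ : Aσ = sSup {r : ℝ | ∃ f : Lp ℂ 2 (volume.restrict I),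
      f ≠ 0 ∧ SigmaUniform I σ U f ∧ r = ‖L f‖ / ‖f‖})
    (hM : M = sSup ((fun u => ‖L u‖) '' U)) :
    ∀ f : Lp ℂ 2 (volume.restrict I), ‖L f‖ ≤ max Aσ (2 / σ * M) * ‖f‖ := by
  intro f
  obtain ⟨B, hB⟩ := hUbdd
  have hM0 : 0 ≤ M := hM ▸ Real.sSup_nonneg (forall_mem_image.mpr fun u _ => norm_nonneg (L u))
  have sharp_bound : ‖L f‖ ≤ max Aσ (1 / σ * M) * ‖f‖ := by
    simp only [hAσ, hM, sigmaUniform_iff_isSigmaUniform]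
    exact sigma_uniformity_lemma_general (Seminorm.of (fun g => ‖L g‖) hLsub hLhom) hσ0 hLbdd
      (bddAbove_image_of_le_mul_norm hK hLbdd hB) f
  calc ‖L f‖ ≤ max Aσ (1 / σ * M) * ‖f‖ := sharp_bound
    _ ≤ max Aσ (2 / σ * M) * ‖f‖ := by gcongr; exact one_le_two

end
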